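/- arXiv:1901.02060 — 5 statements merged into one kernel-verified Lean document; each statement's English description precedes it below -/
import Mathlib

section
/- Let S be a Euclidean domain and let A be a finitely generated S-module, so that A is isomorphic to S^m ⊕ TA for some m ≥ 0, where TA is the torsion submodule of A. Let B be a submodule of A, let q : A → A/B be the quotient map, and suppose C is a submodule of A/B whose generating rank ℓ = grr_S(C) satisfies ℓ > m. Then there exists a submodule C' of A/B with C' ⊆ C, with C' contained in q(TA) (the image of the torsion submodule of A in A/B), and with generating rank grr_S(C') = ℓ − m. -/
/-- The generating rank of a module `M` over a commutative ring `S`: the minimal number of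
elements needed to generate `M` as an `S`-module. -/
noncomputable def grr (S : Type) [CommRing S] (M : Type) [AddCommGroup M] [Module S M] : ℕ :=
  sInf {n : ℕ | ∃ s : Finset M, s.card = n ∧ Submodule.span S (s : Set M) = ⊤}

/-!
Writing `q(T)` for the image of `T = TA` in `A ⧸ B`, the quotient of `A ⧸ B` by `q(T)` is a
quotient of `A ⧸ T ≅ S ^ m`, so over a principal ideal ring the image of `C` in it needs at most
`m` generators. Lifting these and adding generators of `C ⊓ q(T)` generates `C`, so `C ⊓ q(T)`
needs at least `ℓ - m` generators; any `ℓ - m` members of a minimal generating set of `C ⊓ q(T)`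
span a suitable `C'`.
-/

universe u

section SpanRank

variable {R : Type*} {M N : Type u} [Ring R] [AddCommGroup M] [Module R M]
  [AddCommGroup N] [Module R N]

theorem exists_le_map_eq_spanRank_le (f : M →ₗ[R] N) (P : Submodule R M) :
    ∃ Q ≤ P, Q.map f = P.map f ∧ Q.spanRank ≤ (P.map f).spanRank := by
  obtain ⟨t, ht_card, ht_span⟩ := (P.map f).exists_span_set_card_eq_spanRank
  have ht : t ⊆ f '' P := by
    rw [← Submodule.map_coe, ← ht_span]
    exact Submodule.subset_span
  obtain ⟨s, hsP, hs_bij⟩ := Set.SurjOn.exists_bijOn_subset ht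
  refine ⟨Submodule.span R s, Submodule.span_le.2 hsP, ?_, ?_⟩
  · rw [Submodule.map_span, hs_bij.image_eq, ht_span]
  · calc (Submodule.span R s).spanRank ≤ Cardinal.mk s := Submodule.spanRank_span_le_card s
      _ = Cardinal.mk t := Cardinal.mk_congr hs_bij.equiv
      _ = (P.map f).spanRank := ht_card

theorem spanRank_le_spanRank_map_add_spanRank_inf_ker (f : M →ₗ[R] N) (P : Submodule R M) :
    P.spanRank ≤ (P.map f).spanRank + (P ⊓ LinearMap.ker f).spanRank := by
  obtain ⟨Q, hQP, hQ_map, hQ_rank⟩ := exists_le_map_eq_spanRank_le f P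
  have hP : P = Q ⊔ P ⊓ LinearMap.ker f := by
    rw [inf_comm, ← sup_inf_assoc_of_le _ hQP, ← Submodule.comap_map_eq, hQ_map,
      inf_eq_right.2 (Submodule.le_comap_map f P)]
  calc P.spanRank = (Q ⊔ P ⊓ LinearMap.ker f).spanRank := congrArg _ hP
    _ ≤ Q.spanRank + (P ⊓ LinearMap.ker f).spanRank := Submodule.spanRank_sup_le_sum_spanRank
    _ ≤ (P.map f).spanRank + (P ⊓ LinearMap.ker f).spanRank := by gcongr

theorem exists_le_spanFinrank_eq {P : Submodule R M} (hP : P.FG) {k : ℕ}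
    (hk : k ≤ P.spanFinrank) : ∃ Q ≤ P, Q.spanFinrank = k := by
  classical
  obtain ⟨s, hs_card, rfl⟩ := hP.exists_span_finset_card_eq_spanFinrank
  obtain ⟨t, hts, rfl⟩ := Finset.exists_subset_card_eq (hs_card ▸ hk)
  have span_card_le (u : Finset M) : (Submodule.span R (u : Set M)).spanRank ≤ u.card := by
    simpa using Submodule.spanRank_span_le_card (R := R) (u : Set M)
  have ht_fg : (Submodule.span R (t : Set M)).FG := ⟨t, rfl⟩
  refine ⟨Submodule.span R t, Submodule.span_mono hts,
    le_antisymm ((ht_fg.spanRank_le_iff _).1 (span_card_le t)) ?_⟩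
  have h_split : Submodule.span R (s : Set M) =
      Submodule.span R t ⊔ Submodule.span R (s \ t : Finset M) := by
    rw [← Submodule.span_union, ← Finset.coe_union, Finset.union_sdiff_of_subset hts]
  have h_card : s.card ≤ (Submodule.span R (t : Set M)).spanFinrank + (s \ t).card := by
    rw [hs_card, ← hP.spanRank_le_iff, Nat.cast_add, ← ht_fg.spanRank_eq_spanFinrank, h_split]
    exact Submodule.spanRank_sup_le_sum_spanRank.trans (by gcongr; exact span_card_le _)
  have := Finset.card_sdiff_add_card_eq_card hts
  omega

variable [IsPrincipalIdealRing R]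

theorem spanRank_le_one_of_le_span_singleton {P : Submodule R M} {x : M}
    (hP : P ≤ Submodule.span R {x}) : P.spanRank ≤ 1 := by
  let φ := LinearMap.toSpanSingleton R M x
  have h_range : P ≤ LinearMap.range φ := by rwa [LinearMap.range_toSpanSingleton]
  have hP_principal : P.IsPrincipal := by
    rw [← Submodule.map_comap_eq_of_le h_range]
    exact (IsPrincipalIdealRing.principal (P.comap φ)).map φ
  obtain ⟨y, rfl⟩ := hP_principal
  simpa using Submodule.spanRank_span_le_card (R := R) {y}

theorem spanRank_le_card_of_le_span (s : Finset M) {P : Submodule R M}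
    (hP : P ≤ Submodule.span R s) : P.spanRank ≤ s.card := by
  classical
  induction s using Finset.induction_on generalizing P with
  | empty => simp_all
  | insert x s hx ih =>
    let f := (Submodule.span R (s : Set M)).mkQ
    have h_map : P.map f ≤ Submodule.span R {f x} := by
      calc P.map f ≤ (Submodule.span R {x} ⊔ Submodule.span R s).map f := by
            rw [← Submodule.span_insert, ← Finset.coe_insert]
            exact Submodule.map_mono hP
        _ = Submodule.span R {f x} := by
            rw [Submodule.map_sup, Submodule.map_span, Set.image_singleton,
              Submodule.mkQ_map_self, sup_bot_eq]
    have h_ker : P ⊓ LinearMap.ker f ≤ Submodule.span R s := by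
      rw [Submodule.ker_mkQ]
      exact inf_le_right
    rw [Finset.card_insert_of_notMem hx, Nat.cast_add, Nat.cast_one, add_comm]
    exact (spanRank_le_spanRank_map_add_spanRank_inf_ker f P).trans
      (add_le_add (spanRank_le_one_of_le_span_singleton h_map) (ih h_ker))

theorem spanRank_le_of_le {P Q : Submodule R M} (hQ : Q.FG) (hPQ : P ≤ Q) :
    P.spanRank ≤ Q.spanRank := by
  obtain ⟨s, hs_card, rfl⟩ := hQ.exists_span_finset_card_eq_spanFinrank
  rw [hQ.spanRank_eq_spanFinrank, ← hs_card]
  exact spanRank_le_card_of_le_span s hPQ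

theorem exists_le_inf_spanFinrank_eq_sub (T C : Submodule R M) {m : ℕ}
    (hT : (⊤ : Submodule R (M ⧸ T)).spanRank ≤ m) (hC : C.FG) :
    ∃ C' ≤ C ⊓ T, C'.spanFinrank = C.spanFinrank - m := by
  have h_top : (⊤ : Submodule R (M ⧸ T)).FG :=
    Submodule.spanRank_finite_iff_fg.1 (hT.trans_lt Cardinal.natCast_lt_aleph0)
  have h_inf : (C ⊓ T).FG := Submodule.spanRank_finite_iff_fg.1
    ((spanRank_le_of_le hC inf_le_left).trans_lt (Submodule.spanRank_finite_iff_fg.2 hC))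
  apply exists_le_spanFinrank_eq h_inf
  rw [tsub_le_iff_left, ← hC.spanRank_le_iff, Nat.cast_add, ← h_inf.spanRank_eq_spanFinrank]
  calc C.spanRank ≤ (C.map T.mkQ).spanRank + (C ⊓ LinearMap.ker T.mkQ).spanRank :=
        spanRank_le_spanRank_map_add_spanRank_inf_ker T.mkQ C
    _ ≤ m + (C ⊓ T).spanRank := by
        rw [Submodule.ker_mkQ]
        gcongr
        exact (spanRank_le_of_le h_top le_top).trans hT

theorem stmt_4_general (B T : Submodule R M) {m : ℕ}
    (hT : (⊤ : Submodule R (M ⧸ T)).spanRank ≤ m) (C : Submodule R (M ⧸ B))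
    (hm : m < C.spanFinrank) :
    ∃ C' ≤ C, C' ≤ T.map B.mkQ ∧ C'.spanFinrank = C.spanFinrank - m := by
  have hC : C.FG := by
    by_contra h
    simp [Submodule.spanFinrank_of_not_fg h] at hm
  let q := T.mapQ (T.map B.mkQ) B.mkQ (Submodule.le_comap_map _ _)
  have hq : LinearMap.range q = ⊤ := by
    rw [Submodule.range_mapQ, Submodule.range_mkQ, Submodule.map_top, Submodule.range_mkQ]
  obtain ⟨C', hC', h_rank⟩ := exists_le_inf_spanFinrank_eq_sub (T.map B.mkQ) C
    (hq ▸ (Submodule.spanRank_range_le q).trans hT) hC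
  exact ⟨C', hC'.trans inf_le_left, hC'.trans inf_le_right, h_rank⟩

end SpanRank

theorem spanRank_top_quotient_torsion_le {R : Type*} {M N : Type u} [CommRing R]
    [AddCommGroup M] [Module R M] [AddCommGroup N] [Module R N]
    (e : M ≃ₗ[R] N × Submodule.torsion R M) :
    (⊤ : Submodule R (M ⧸ Submodule.torsion R M)).spanRank ≤ (⊤ : Submodule R N).spanRank := by
  let f := (Submodule.torsion R M).mkQ ∘ₗ e.symm.toLinearMap ∘ₗ LinearMap.inl R N _
  have hf : LinearMap.range f = ⊤ := by
    refine LinearMap.range_eq_top.2 fun y ↦ ?_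
    obtain ⟨x, rfl⟩ := Submodule.mkQ_surjective _ y
    obtain ⟨r, hr⟩ := Submodule.torsion_isTorsion (R := R) (x := (e x).2)
    refine ⟨(e x).1, (Submodule.Quotient.eq _).2 <|
      (Submodule.mem_torsion_iff _).2 ⟨r, e.injective ?_⟩⟩
    have hr' : (r : R) • (e x).2 = 0 := hr
    ext <;> simp [Submonoid.smul_def, hr']
  exact hf ▸ Submodule.spanRank_range_le f

theorem grr_eq_spanFinrank {S M : Type} [CommRing S] [AddCommGroup M] [Module S M]
    (P : Submodule S M) : grr S P = P.spanFinrank := by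
  rw [← Submodule.spanFinrank_top, Submodule.spanFinrank_eq_iInf, grr, iInf]
  congr 1
  ext n
  simp [and_comm]

/-- Let `S` be a Euclidean domain and `A` a finitely generated `S`-module, isomorphic to
`S^m ⊕ TA` where `TA` is the torsion submodule of `A`.  Let `B ≤ A` be a submodule,
`q : A → A/B` the quotient map, and `C` a submodule of `A/B` of generating rank `ℓ > m`.
Then there is a submodule `C' ⊆ C` of `A/B` contained in `q(TA)` with generating rank
`ℓ − m`. -/
theorem stmt_4 (S : Type) [EuclideanDomain S]
    (A : Type) [AddCommGroup A] [Module S A] [Module.Finite S A]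
    (m : ℕ) (hiso : Nonempty (A ≃ₗ[S] ((Fin m → S) × ↥(Submodule.torsion S A))))
    (B : Submodule S A) (C : Submodule S (A ⧸ B))
    (ℓ : ℕ) (hℓ : grr S ↥C = ℓ) (hlm : m < ℓ) :
    ∃ C' : Submodule S (A ⧸ B), C' ≤ C ∧
      C' ≤ (Submodule.torsion S A).map B.mkQ ∧
      grr S ↥C' = ℓ - m := by
  obtain ⟨e⟩ := hiso
  have h_rank : (⊤ : Submodule S (Fin m → S)).spanRank ≤ m := by
    rw [← Submodule.rank_eq_spanRank_of_free, rank_fin_fun]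
  simp only [grr_eq_spanFinrank] at hℓ ⊢
  subst hℓ
  exact stmt_4_general B _ ((spanRank_top_quotient_torsion_le e).trans h_rank) C hlm
end

section
/- Let S be a commutative principal ideal domain with field of fractions Q, and let Q/S denote the quotient S-module Q ⧸ (image of S in Q). For an S-module M write M^∧ := Hom_S(M, Q/S), and for an S-linear map g write g^∧ := Hom_S(g, Q/S). If g : A → B is an S-linear map between finitely generated torsion S-modules, then the cokernel of g^∧ : B^∧ → A^∧ is isomorphic as an S-module to ker(g). -/
/-- For a commutative PID `S` with field of fractions `Q`, this is the quotient `S`-module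
`Q/S`, i.e. `Q` modulo the image of `S` in `Q`. -/
abbrev QmodS (S : Type) [CommRing S] [IsDomain S] : Type :=
  FractionRing S ⧸ LinearMap.range (Algebra.linearMap S (FractionRing S))

/-!
The module `K ⧸ R` is divisible, hence injective over a principal ideal domain `R`, so the cokernel
of `g^∧` is the dual of `ker g`. A finitely generated torsion module is self-dual, though not
canonically: it is a finite direct sum of modules `R ⧸ (a)` with `a ≠ 0`, and the dual of `R ⧸ (a)`
is the `a`-torsion of `K ⧸ R`, which is generated by the class of `a⁻¹` and so is again `R ⧸ (a)`.
-/

open Function Submodule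

section Injective

theorem baer_of_surjective_smul {R M : Type*} [Ring R] [IsPrincipalIdealRing R]
    [AddCommGroup M] [Module R M] (hM : ∀ r : R, r ≠ 0 → Surjective (r • · : M → M)) :
    Module.Baer R M := by
  intro I f
  obtain ⟨a, rfl⟩ := IsPrincipalIdealRing.principal I
  obtain rfl | ha := eq_or_ne a 0
  · refine ⟨0, fun r hr ↦ ?_⟩
    obtain rfl : r = 0 := by simpa using hr
    exact (map_zero f).symm
  · obtain ⟨y, hy : a • y = f ⟨a, mem_span_singleton_self a⟩⟩ := hM a ha _
    refine ⟨LinearMap.toSpanSingleton R M y, fun r hr ↦ ?_⟩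
    obtain ⟨s, rfl⟩ := mem_span_singleton.mp hr
    rw [LinearMap.toSpanSingleton_apply, smul_assoc, hy, ← map_smul, SetLike.mk_smul_mk]

variable {R M₁ M₂ M₃ Q : Type*} [CommRing R] [AddCommGroup M₁] [AddCommGroup M₂] [AddCommGroup M₃]
  [AddCommGroup Q] [Module R M₁] [Module R M₂] [Module R M₃] [Module R Q]

theorem exact_lcomp_of_baer (hQ : Module.Baer R Q) {f : M₁ →ₗ[R] M₂} {g : M₂ →ₗ[R] M₃}
    (hfg : Exact f g) : Exact (LinearMap.lcomp R Q g) (LinearMap.lcomp R Q f) := by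
  have hfg' : Exact f g.rangeRestrict := fun x ↦ by rw [← hfg x, ← Subtype.coe_inj]; rfl
  have hrestrict : Surjective (LinearMap.lcomp R Q g.range.subtype) :=
    hQ.extension_property _ g.range.subtype_injective
  intro h
  rw [LinearMap.exact_lcomp_of_exact_of_surjective Q hfg' g.surjective_rangeRestrict h,
    ← hrestrict.range_comp]
  rfl

/-- The cokernel of the dual of `g` is the dual of the kernel of `g`, where duals are taken with
values in an injective module `Q`. Injectivity is expressed by Baer's criterion, which puts no
constraint on universes. -/
noncomputable def quotRangeLcompEquiv (hQ : Module.Baer R Q) (g : M₁ →ₗ[R] M₂) :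
    ((M₁ →ₗ[R] Q) ⧸ LinearMap.range (LinearMap.lcomp R Q g)) ≃ₗ[R] (LinearMap.ker g →ₗ[R] Q) :=
  (exact_lcomp_of_baer hQ g.exact_subtype_ker_map).linearEquivOfSurjective
    (hQ.extension_property _ (LinearMap.ker g).subtype_injective)

end Injective

/-- A linear map out of `R ⧸ (a)` amounts to an element killed by `a`, the image of `1`. -/
def quotSpanSingletonHomEquivTorsionBy {R : Type*} [CommRing R] (M : Type*) [AddCommGroup M]
    [Module R M] (a : R) :
    ((R ⧸ R ∙ a) →ₗ[R] M) ≃ₗ[R] torsionBy R M a where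
  toFun f := ⟨f (Submodule.Quotient.mk 1), by
    rw [mem_torsionBy_iff, ← map_smul, ← Submodule.Quotient.mk_smul, smul_eq_mul, mul_one,
      (Submodule.Quotient.mk_eq_zero _).mpr (mem_span_singleton_self a), map_zero]⟩
  map_add' _ _ := rfl
  map_smul' _ _ := rfl
  invFun x := liftQSpanSingleton a (LinearMap.toSpanSingleton R M x) x.2
  left_inv f := by ext; exact one_smul R _
  right_inv x := Subtype.ext (one_smul R _)

section FieldModBaseRing

variable (R K : Type*) [CommRing R] [Field K] [Algebra R K] [FaithfulSMul R K]

theorem surjective_smul_field_quotient (N : Submodule R K) {r : R} (hr : r ≠ 0) :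
    Surjective (r • · : K ⧸ N → K ⧸ N) := by
  intro x
  obtain ⟨q, rfl⟩ := N.mkQ_surjective x
  have hr' : algebraMap R K r ≠ 0 := by simpa using hr
  refine ⟨N.mkQ (q / algebraMap R K r), ?_⟩
  change r • N.mkQ _ = _
  rw [← map_smul, Algebra.smul_def, mul_div_cancel₀ _ hr']

theorem baer_field_quotient [IsPrincipalIdealRing R] (N : Submodule R K) :
    Module.Baer R (K ⧸ N) :=
  baer_of_surjective_smul fun _ ↦ surjective_smul_field_quotient R K N

variable {R}

theorem torsionOf_mk_inv_algebraMap {a : R} (ha : a ≠ 0) :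
    Ideal.torsionOf R (K ⧸ LinearMap.range (Algebra.linearMap R K))
      (Submodule.Quotient.mk (algebraMap R K a)⁻¹) = R ∙ a := by
  have ha' : algebraMap R K a ≠ 0 := by simpa using ha
  ext s
  rw [Ideal.mem_torsionOf_iff, ← Submodule.Quotient.mk_smul, Submodule.Quotient.mk_eq_zero,
    LinearMap.mem_range, mem_span_singleton]
  refine exists_congr fun t ↦ ?_
  rw [Algebra.linearMap_apply, Algebra.smul_def, eq_mul_inv_iff_mul_eq₀ ha', ← map_mul,
    (FaithfulSMul.algebraMap_injective R K).eq_iff, smul_eq_mul]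

theorem torsionBy_eq_span_mk_inv_algebraMap {a : R} (ha : a ≠ 0) :
    torsionBy R (K ⧸ LinearMap.range (Algebra.linearMap R K)) a =
      R ∙ Submodule.Quotient.mk (algebraMap R K a)⁻¹ := by
  have ha' : algebraMap R K a ≠ 0 := by simpa using ha
  refine le_antisymm (fun x hx ↦ ?_) ?_
  · obtain ⟨q, rfl⟩ := Submodule.Quotient.mk_surjective _ x
    rw [mem_torsionBy_iff, ← Submodule.Quotient.mk_smul, Submodule.Quotient.mk_eq_zero] at hx
    obtain ⟨s, hs : algebraMap R K s = a • q⟩ := hx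
    refine mem_span_singleton.mpr ⟨s, ?_⟩
    rw [← Submodule.Quotient.mk_smul, Algebra.smul_def, hs, Algebra.smul_def, mul_comm,
      inv_mul_cancel_left₀ ha']
  · rw [span_singleton_le_iff_mem, mem_torsionBy_iff, ← Ideal.mem_torsionOf_iff,
      torsionOf_mk_inv_algebraMap K ha]
    exact mem_span_singleton_self a

/-- A cyclic torsion module `R ⧸ (a)` is isomorphic to its dual with values in `K ⧸ R`, an element
`s` corresponding to the linear map sending `1` to the class of `s / a`. -/
noncomputable def quotSpanSingletonDualEquiv {a : R} (ha : a ≠ 0) :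
    ((R ⧸ R ∙ a) →ₗ[R] K ⧸ LinearMap.range (Algebra.linearMap R K)) ≃ₗ[R] R ⧸ R ∙ a :=
  quotSpanSingletonHomEquivTorsionBy _ a ≪≫ₗ
    LinearEquiv.ofEq _ _ (torsionBy_eq_span_mk_inv_algebraMap K ha) ≪≫ₗ
    (Ideal.quotTorsionOfEquivSpanSingleton R _ _).symm ≪≫ₗ
    quotEquivOfEq _ _ (torsionOf_mk_inv_algebraMap K ha)

theorem nonempty_dual_equiv_of_isTorsion [IsDomain R] [IsPrincipalIdealRing R]
    {M : Type*} [AddCommGroup M] [Module R M] [Module.Finite R M] (hM : Module.IsTorsion R M) :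
    Nonempty ((M →ₗ[R] K ⧸ LinearMap.range (Algebra.linearMap R K)) ≃ₗ[R] M) := by
  classical
  obtain ⟨ι, _, p, hp, e, ⟨decomposition⟩⟩ := Module.equiv_directSum_of_isTorsion hM
  let E : M ≃ₗ[R] ∀ i, R ⧸ R ∙ p i ^ e i :=
    decomposition ≪≫ₗ DirectSum.linearEquivFunOnFintype R ι _
  exact ⟨E.congrLeft _ R ≪≫ₗ (LinearMap.lsum R _ R).symm ≪≫ₗ
    LinearEquiv.piCongrRight
      (fun i ↦ quotSpanSingletonDualEquiv K (pow_ne_zero (e i) (hp i).ne_zero)) ≪≫ₗ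
    E.symm⟩

end FieldModBaseRing

theorem stmt_5_general {S : Type*} (K : Type*) [CommRing S] [IsDomain S] [IsPrincipalIdealRing S]
    [Field K] [Algebra S K] [FaithfulSMul S K] {A B : Type*} [AddCommGroup A] [Module S A]
    [AddCommGroup B] [Module S B] (g : A →ₗ[S] B) [Module.Finite S (LinearMap.ker g)]
    (hg : Module.IsTorsion S (LinearMap.ker g)) :
    Nonempty
      (((A →ₗ[S] K ⧸ LinearMap.range (Algebra.linearMap S K)) ⧸
        LinearMap.range (LinearMap.lcomp S (K ⧸ LinearMap.range (Algebra.linearMap S K)) g))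
        ≃ₗ[S] LinearMap.ker g) :=
  (nonempty_dual_equiv_of_isTorsion K hg).map
    (quotRangeLcompEquiv (baer_field_quotient S K _) g ≪≫ₗ ·)

/-- Let `S` be a commutative PID with field of fractions `Q`, and write `M^∧ = Hom_S(M, Q/S)`.
If `g : A → B` is an `S`-linear map between finitely generated torsion `S`-modules, then the
cokernel of `g^∧ : B^∧ → A^∧` (where `g^∧` is precomposition with `g`) is isomorphic as an
`S`-module to `ker g`. -/
theorem stmt_5 (S : Type) [CommRing S] [IsDomain S] [IsPrincipalIdealRing S]
    (A B : Type) [AddCommGroup A] [Module S A] [AddCommGroup B] [Module S B]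
    [Module.Finite S A] [Module.Finite S B]
    (hA : Module.IsTorsion S A) (hB : Module.IsTorsion S B)
    (g : A →ₗ[S] B) :
    Nonempty
      (((A →ₗ[S] QmodS S) ⧸ LinearMap.range (LinearMap.lcomp S (QmodS S) g)
        : Type) ≃ₗ[S] ↥(LinearMap.ker g)) := by
  exact stmt_5_general (FractionRing S) g fun x ↦ (@hA x).imp fun _ hx ↦ Subtype.ext hx
end

section
/- Let p be a prime, let M ≥ 0 and 0 ≤ ℓ ≤ M, and let W be a ℤ/p-linear subspace of (ℤ/p)^M of dimension ℓ. Then W contains a vector at least ℓ of whose coordinates are nonzero, i.e., there exists w ∈ W such that the number of indices i ∈ {1, …, M} with wᵢ ≠ 0 is at least ℓ. -/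
/-!
Choose `w ∈ W` with support `s` of size less than `rank W`. Restriction to the coordinates in `s`
cannot be injective on `W`, so some nonzero `v ∈ W` vanishes on `s`. The support of `w + v` is then
strictly larger than `s`, so supports can be enlarged one step at a time until they reach the
required size.
-/

open Function

theorem support_add_eq_union_of_disjoint {ι A : Type*} [AddZeroClass A] {f g : ι → A}
    (hfg : Disjoint (support f) (support g)) : support (f + g) = support f ∪ support g := by
  refine (support_add f g).antisymm (Set.union_subset (fun i hf => ?_) fun i hg => ?_)
  · have hg : g i = 0 := notMem_support.1 (hfg.notMem_of_mem_left hf)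
    simpa [hg] using hf
  · have hf : f i = 0 := notMem_support.1 (hfg.notMem_of_mem_right hg)
    simpa [hf] using hg

section

variable {R ι : Type*} [Ring R] [StrongRankCondition R] {W : Submodule R (ι → R)}

theorem exists_mem_ne_zero_disjoint_support_of_ncard_lt_rank {s : Set ι} (hs : s.Finite)
    (hcard : s.ncard < Module.rank R W) : ∃ v ∈ W, v ≠ 0 ∧ Disjoint s (support v) := by
  have := hs.fintype
  let restrict : W →ₗ[R] (s → R) := LinearMap.funLeft R R (↑) ∘ₗ W.subtype
  have not_injective : ¬ Injective restrict := fun h => hcard.not_ge <|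
    calc
      Module.rank R W ≤ Module.rank R (s → R) := restrict.rank_le_of_injective h
      _ = Fintype.card s := rank_fun'
      _ = s.ncard := by rw [Set.fintypeCard_eq_ncard]
  obtain ⟨v, hv, hv_ne⟩ : ∃ v, restrict v = 0 ∧ v ≠ 0 := by
    simpa [injective_iff_map_eq_zero] using not_injective
  refine ⟨v, v.2, by simpa using hv_ne, Set.disjoint_left.2 fun i hi => ?_⟩
  exact notMem_support.2 (congrFun hv ⟨i, hi⟩)

theorem exists_mem_support_ssubset_of_ncard_lt_rank {w : ι → R} (hw : w ∈ W)
    (hfin : (support w).Finite) (hcard : (support w).ncard < Module.rank R W) :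
    ∃ w' ∈ W, support w ⊂ support w' := by
  obtain ⟨v, hv, hv_ne, hdisj⟩ :=
    exists_mem_ne_zero_disjoint_support_of_ncard_lt_rank hfin hcard
  obtain ⟨i, hi⟩ := support_nonempty_iff.2 hv_ne
  refine ⟨w + v, W.add_mem hw hv, ?_⟩
  rw [support_add_eq_union_of_disjoint hdisj]
  exact Set.ssubset_union_left_iff.2 fun h => hdisj.notMem_of_mem_right hi (h hi)

theorem stmt_9_general {n : ℕ} (hn : n ≤ Module.rank R W) :
    ∃ w ∈ W, n ≤ (support w).encard := by
  induction n with
  | zero => exact ⟨0, W.zero_mem, by simp⟩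
  | succ n ih =>
    have hlt : n < Module.rank R W := Cardinal.natCast_add_one_le_iff.1 (mod_cast hn)
    obtain ⟨w, hw, hnw⟩ := ih hlt.le
    obtain hlarge | heq := hnw.lt_or_eq
    · exact ⟨w, hw, mod_cast ENat.natCast_add_one_le_iff.2 hlarge⟩
    · have hfin : (support w).Finite := Set.finite_of_encard_eq_coe heq.symm
      have hcard : (support w).ncard = n := by simp [Set.ncard, ← heq]
      obtain ⟨w', hw', hss⟩ :=
        exists_mem_support_ssubset_of_ncard_lt_rank hw hfin (hcard ▸ hlt)
      refine ⟨w', hw', mod_cast ENat.natCast_add_one_le_iff.2 ?_⟩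
      exact heq ▸ hfin.encard_lt_encard hss

end

/-- Let `p` be a prime, `0 ≤ ℓ ≤ M`, and `W` a `ℤ/p`-linear subspace of `(ℤ/p)^M` of
dimension `ℓ`.  Then `W` contains a vector at least `ℓ` of whose coordinates are nonzero. -/
theorem stmt_9 (p : ℕ) [Fact p.Prime] (M ℓ : ℕ) (hℓM : ℓ ≤ M)
    (W : Submodule (ZMod p) (Fin M → ZMod p))
    (hW : Module.finrank (ZMod p) W = ℓ) :
    ∃ w ∈ W, ℓ ≤ (Finset.univ.filter fun i : Fin M => w i ≠ 0).card := by
  obtain ⟨w, hw, hℓw⟩ := stmt_9_general (hW ▸ (Module.finrank_eq_rank (ZMod p) W).le)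
  exact ⟨w, hw, by simpa [support, Set.encard_eq_coe_toFinset_card] using hℓw⟩
end

section
/- Let C be an ℕ-indexed chain complex of finitely generated free ℤ-modules and let p be a prime. Then for every n, dim_ℚ Hₙ(C ⊗_ℤ ℚ) ≤ dim_{ℤ/p} Hₙ(C ⊗_ℤ ℤ/p), where the tensor products are applied degreewise. -/
open TensorProduct

/-- The dimension of the `n`-th homology of an ℕ-indexed chain complex of vector spaces
over a field `k`, given by modules `X n` and boundary maps `d n : X (n+1) → X n`
(so that `∂_{n+1} = d n`): in degree 0 it is `dim (X 0 / im ∂₁)`, and in degree `n+1` it is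
`dim (ker ∂_{n+1} / im ∂_{n+2})`. -/
noncomputable def homologyDim (k : Type) [Field k] (X : ℕ → Type)
    [∀ n, AddCommGroup (X n)] [∀ n, Module k (X n)]
    (d : ∀ n, X (n + 1) →ₗ[k] X n) : ℕ → ℕ
  | 0 => Module.finrank k (X 0 ⧸ LinearMap.range (d 0))
  | n + 1 =>
    Module.finrank k (↥(LinearMap.ker (d n)) ⧸
      Submodule.comap (LinearMap.ker (d n)).subtype (LinearMap.range (d (n + 1))))

/-!
Over a field `k`, rank–nullity gives `dim Hₙ(C ⊗ k) = rank Cₙ - rank (∂ₙ ⊗ k) - rank (∂ₙ₊₁ ⊗ k)`,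
and `rank Cₙ` does not depend on `k`. So the homology grows exactly when the boundary matrices lose
rank, and ranks can only drop under specialization: a minor which is nonzero in `k` is nonzero in
any field `K` with `ker (R → K) ≤ ker (R → k)`.
-/

section Rank

variable {m n R S k : Type*} [Fintype n] [CommRing R] [CommRing S] [IsDomain S] [Field k]

theorem exists_linearIndependent_col_submatrix (A : Matrix m n k) :
    ∃ c : Fin A.rank → n, LinearIndependent k (A.submatrix id c).col := by
  obtain ⟨κ, c, c_injective, span_eq, linearIndependent⟩ := exists_linearIndependent' k A.col
  have : Fintype κ := Fintype.ofInjective c c_injective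
  have card_eq : Fintype.card κ = A.rank := by
    rw [A.rank_eq_finrank_span_cols, ← span_eq, finrank_span_eq_card linearIndependent]
  let e : Fin A.rank ≃ κ := (Fintype.equivFinOfCardEq card_eq).symm
  exact ⟨c ∘ e, linearIndependent.comp e e.injective⟩

theorem exists_det_submatrix_ne_zero [Finite m] (A : Matrix m n k) :
    ∃ (r : Fin A.rank → m) (c : Fin A.rank → n), (A.submatrix r c).det ≠ 0 := by
  have := Fintype.ofFinite m
  obtain ⟨c, hc⟩ := exists_linearIndependent_col_submatrix A
  have rank_eq : (A.submatrix id c).transpose.rank = A.rank :=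
    hc.rank_matrix.trans (Fintype.card_fin _)
  obtain ⟨r, hr : LinearIndependent k (A.submatrix r c).row⟩ :=
    rank_eq ▸ exists_linearIndependent_col_submatrix (A.submatrix id c).transpose
  have isUnit_det : IsUnit (A.submatrix r c).det :=
    (Matrix.isUnit_iff_isUnit_det _).mp (Matrix.linearIndependent_rows_iff_isUnit.mp hr)
  exact ⟨r, c, isUnit_det.ne_zero⟩

theorem card_le_rank_of_det_submatrix_ne_zero {ι : Type*} [Fintype ι] [DecidableEq ι]
    (A : Matrix m n S) (r : ι → m) (c : ι → n) (h : (A.submatrix r c).det ≠ 0) :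
    Fintype.card ι ≤ A.rank :=
  (Matrix.rank_of_det_ne_zero h).symm.trans_le (A.rank_submatrix_le r c)

theorem rank_map_le_rank_map_of_ker_le [Finite m] (A : Matrix m n R) (φ : R →+* S) (ψ : R →+* k)
    (hker : RingHom.ker φ ≤ RingHom.ker ψ) : (A.map ψ).rank ≤ (A.map φ).rank := by
  obtain ⟨r, c, ψ_minor_ne_zero⟩ := exists_det_submatrix_ne_zero (A.map ψ)
  rw [Matrix.submatrix_map, ← RingHom.mapMatrix_apply, ← RingHom.map_det] at ψ_minor_ne_zero
  have φ_minor_ne_zero : ((A.map φ).submatrix r c).det ≠ 0 := by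
    rw [Matrix.submatrix_map, ← RingHom.mapMatrix_apply, ← RingHom.map_det]
    exact fun h => ψ_minor_ne_zero (hker h)
  simpa only [Fintype.card_fin] using card_le_rank_of_det_submatrix_ne_zero _ r c φ_minor_ne_zero

end Rank

section BaseChange

variable {R M N : Type*} [CommRing R] [AddCommGroup M] [Module R M] [AddCommGroup N] [Module R N]

theorem finrank_range_baseChange_eq_rank {ι κ S : Type*} [Fintype ι] [DecidableEq ι] [Finite κ]
    [CommRing S] [Algebra R S] (b : Module.Basis ι R M) (c : Module.Basis κ R N) (f : M →ₗ[R] N) :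
    Module.finrank S (LinearMap.range (f.baseChange S)) =
      ((LinearMap.toMatrix b c f).map (algebraMap R S)).rank := by
  rw [← LinearMap.toMatrix_baseChange S f b c,
    Matrix.rank_eq_finrank_range_toLin _ (Algebra.TensorProduct.basis S c)
      (Algebra.TensorProduct.basis S b), Matrix.toLin_toMatrix]

theorem finrank_range_baseChange_le_of_ker_le [Module.Free R M] [Module.Finite R M]
    [Module.Free R N] [Module.Finite R N] {S k : Type*} [CommRing S] [IsDomain S] [Algebra R S]
    [Field k] [Algebra R k] (hker : RingHom.ker (algebraMap R S) ≤ RingHom.ker (algebraMap R k))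
    (f : M →ₗ[R] N) :
    Module.finrank k (LinearMap.range (f.baseChange k)) ≤
      Module.finrank S (LinearMap.range (f.baseChange S)) := by
  let b := Module.Free.chooseBasis R M
  let c := Module.Free.chooseBasis R N
  rw [finrank_range_baseChange_eq_rank b c, finrank_range_baseChange_eq_rank b c]
  exact rank_map_le_rank_map_of_ker_le _ _ _ hker

theorem baseChange_comp_baseChange_eq_zero {P : Type*} [AddCommGroup P] [Module R P] (S : Type*)
    [CommRing S] [Algebra R S] {f : M →ₗ[R] N} {g : N →ₗ[R] P} (h : g ∘ₗ f = 0) :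
    g.baseChange S ∘ₗ f.baseChange S = 0 := by
  rw [← LinearMap.baseChange_comp, h, LinearMap.baseChange_zero]

end BaseChange

theorem finrank_ker_quotient_range_add_finrank_range {k U V W : Type*} [DivisionRing k]
    [AddCommGroup U] [Module k U] [AddCommGroup V] [Module k V] [FiniteDimensional k V]
    [AddCommGroup W] [Module k W] {f : U →ₗ[k] V} {g : V →ₗ[k] W} (h : g ∘ₗ f = 0) :
    Module.finrank k (LinearMap.ker g ⧸ (LinearMap.range f).submoduleOf (LinearMap.ker g)) +
      Module.finrank k (LinearMap.range f) + Module.finrank k (LinearMap.range g) =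
      Module.finrank k V := by
  have range_le_ker : LinearMap.range f ≤ LinearMap.ker g := LinearMap.range_le_ker_iff.mpr h
  rw [← (Submodule.submoduleOfEquivOfLe range_le_ker).finrank_eq,
    Submodule.finrank_quotient_add_finrank, add_comm, LinearMap.finrank_range_add_finrank_ker]

section HomologyDim

variable (k : Type) [Field k] (X : ℕ → Type) [∀ n, AddCommGroup (X n)] [∀ n, Module k (X n)]
  (d : ∀ n, X (n + 1) →ₗ[k] X n)

theorem homologyDim_zero_add_finrank_range [FiniteDimensional k (X 0)] :
    homologyDim k X d 0 + Module.finrank k (LinearMap.range (d 0)) = Module.finrank k (X 0) :=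
  Submodule.finrank_quotient_add_finrank _

theorem homologyDim_succ_add_finrank_range {n : ℕ} [FiniteDimensional k (X (n + 1))]
    (hdd : d n ∘ₗ d (n + 1) = 0) :
    homologyDim k X d (n + 1) + Module.finrank k (LinearMap.range (d (n + 1))) +
      Module.finrank k (LinearMap.range (d n)) = Module.finrank k (X (n + 1)) :=
  finrank_ker_quotient_range_add_finrank_range hdd

end HomologyDim

theorem stmt_13_general {R : Type*} [CommRing R] (X : ℕ → Type) [∀ n, AddCommGroup (X n)]
    [∀ n, Module R (X n)] [∀ n, Module.Free R (X n)] [∀ n, Module.Finite R (X n)]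
    (d : ∀ n, X (n + 1) →ₗ[R] X n) (hdd : ∀ n, d n ∘ₗ d (n + 1) = 0)
    (K k : Type) [Field K] [Algebra R K] [Field k] [Algebra R k]
    (hker : RingHom.ker (algebraMap R K) ≤ RingHom.ker (algebraMap R k)) (n : ℕ) :
    homologyDim K (fun m => K ⊗[R] X m) (fun m => (d m).baseChange K) n ≤
      homologyDim k (fun m => k ⊗[R] X m) (fun m => (d m).baseChange k) n := by
  have := (algebraMap R K).domain_nontrivial
  have finrank_eq (m : ℕ) : Module.finrank K (K ⊗[R] X m) = Module.finrank k (k ⊗[R] X m) := by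
    rw [Module.finrank_baseChange, Module.finrank_baseChange]
  have rank_le (m : ℕ) := finrank_range_baseChange_le_of_ker_le hker (d m)
  cases n with
  | zero =>
    have dim_K := homologyDim_zero_add_finrank_range K (K ⊗[R] X ·) fun m => (d m).baseChange K
    have dim_k := homologyDim_zero_add_finrank_range k (k ⊗[R] X ·) fun m => (d m).baseChange k
    linarith [finrank_eq 0, rank_le 0]
  | succ n =>
    have dim_K := homologyDim_succ_add_finrank_range K (K ⊗[R] X ·)
      (fun m => (d m).baseChange K) (baseChange_comp_baseChange_eq_zero K (hdd n))
    have dim_k := homologyDim_succ_add_finrank_range k (k ⊗[R] X ·)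
      (fun m => (d m).baseChange k) (baseChange_comp_baseChange_eq_zero k (hdd n))
    linarith [finrank_eq (n + 1), rank_le n, rank_le (n + 1)]

/-- Let `C` be an ℕ-indexed chain complex of finitely generated free ℤ-modules and `p` a
prime.  Then for every `n`, `dim_ℚ Hₙ(C ⊗ ℚ) ≤ dim_{ℤ/p} Hₙ(C ⊗ ℤ/p)`. -/
theorem stmt_13 (X : ℕ → Type) [∀ n, AddCommGroup (X n)] [∀ n, Module ℤ (X n)]
    [∀ n, Module.Free ℤ (X n)] [∀ n, Module.Finite ℤ (X n)]
    (d : ∀ n, X (n + 1) →ₗ[ℤ] X n)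
    (hdd : ∀ n, (d n).comp (d (n + 1)) = 0)
    (p : ℕ) [Fact p.Prime] (n : ℕ) :
    homologyDim ℚ (fun m => ℚ ⊗[ℤ] X m) (fun m => (d m).baseChange ℚ) n ≤
      homologyDim (ZMod p) (fun m => ZMod p ⊗[ℤ] X m)
        (fun m => (d m).baseChange (ZMod p)) n :=
  stmt_13_general X d hdd ℚ (ZMod p)
    (((RingHom.injective_iff_ker_eq_bot _).mp (algebraMap ℤ ℚ).injective_int).trans_le bot_le) n
end

section
/- Let G be a group and let g ∈ G be an element of infinite order (g^n ≠ 1 for all nonzero integers n). Then left multiplication by the element 1 − g is injective on the integral group ring ℤ[G]; that is, if x ∈ ℤ[G] satisfies (1 − g)·x = 0, then x = 0. -/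
/-!
If `(1 - r g) x = 0` then `x = r g x`, so the support `S` of `x` satisfies `S ⊆ g S`. As `S` is
finite, counting gives `g S = S`. If `S` contained some `h`, it would contain all the elements
`gⁿ h`, which are pairwise distinct when `g` has infinite order.
-/

section RightCancelMonoid

variable {M : Type*} [RightCancelMonoid M] {g : M}

theorem isOfFinOrder_of_mapsTo_mul_left {s : Set M} (hfin : s.Finite) (hne : s.Nonempty)
    (hmaps : Set.MapsTo (g * ·) s s) : IsOfFinOrder g := by
  obtain ⟨h, hh⟩ := hne
  have pow_mul_mem (n : ℕ) : g ^ n * h ∈ s := by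
    simpa only [mul_left_iterate] using hmaps.iterate n hh
  by_contra hg
  have hinj : Function.Injective fun n : ℕ ↦ g ^ n * h :=
    (mul_left_injective h).comp (RightCancelMonoid.injective_pow_iff_not_isOfFinOrder.mpr hg)
  exact Set.infinite_of_injective_forall_mem hinj pow_mul_mem hfin

theorem isOfFinOrder_of_subset_image_mul_left [DecidableEq M] {s : Finset M} (hne : s.Nonempty)
    (hsub : s ⊆ s.image (g * ·)) : IsOfFinOrder g := by
  have himage : s = s.image (g * ·) := Finset.eq_of_subset_of_card_le hsub Finset.card_image_le
  refine isOfFinOrder_of_mapsTo_mul_left s.finite_toSet hne fun h hh ↦ ?_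
  rw [himage]
  exact Finset.mem_image_of_mem _ hh

theorem eq_zero_of_single_mul_eq_self {R : Type*} [Semiring R] (hg : ¬IsOfFinOrder g) {r : R}
    {x : MonoidAlgebra R M} (hx : MonoidAlgebra.single g r * x = x) : x = 0 := by
  classical
  by_contra hne
  have hsupp : x.coeff.support.Nonempty := by simpa using hne
  have hsub := MonoidAlgebra.support_coeff_single_mul_subset x r g
  rw [hx] at hsub
  exact hg (isOfFinOrder_of_subset_image_mul_left hsupp hsub)

end RightCancelMonoid

theorem stmt_15_general {R M : Type*} [Ring R] [RightCancelMonoid M] {g : M}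
    (hg : ¬IsOfFinOrder g) (r : R) : IsLeftRegular (1 - MonoidAlgebra.single g r) := by
  refine isLeftRegular_iff_right_eq_zero_of_mul.mpr fun x hx ↦ ?_
  rw [sub_mul, one_mul, sub_eq_zero] at hx
  exact eq_zero_of_single_mul_eq_self hg hx.symm

/-- Let `G` be a group and `g ∈ G` of infinite order.  Then left multiplication by `1 − g`
is injective on the integral group ring `ℤ[G]`: if `(1 − g)·x = 0` then `x = 0`. -/
theorem stmt_15 (G : Type) [Group G] (g : G)
    (hg : ∀ n : ℤ, n ≠ 0 → g ^ n ≠ 1)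
    (x : MonoidAlgebra ℤ G)
    (hx : (1 - MonoidAlgebra.of ℤ G g) * x = 0) :
    x = 0 := by
  have hord : ¬IsOfFinOrder g := by simpa [isOfFinOrder_iff_zpow_eq_one] using hg
  exact isLeftRegular_iff_right_eq_zero_of_mul.mp (stmt_15_general hord 1) x hx
end
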